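/- Let x, y be probability vectors of dimension d sorted in nonincreasing order (x_0 ≥ x_1 ≥ … ≥ x_{d−1}, similarly for y), and let c be a probability vector of dimension k with strictly positive entries. If x⊗c ≺ y⊗c, then x_0 ≤ y_0 and x_{d−1} ≥ y_{d−1}. -/

import Mathlib

/-- The sum of the `k` largest entries of a vector (equivalently, for vectors with
nonnegative entries, the maximum of `∑ i ∈ s, x i` over subsets `s` of cardinality at
most `k`; this also accounts for padding with zeros). -/
noncomputable def topSum {ι : Type*} [Fintype ι] [DecidableEq ι] (x : ι → ℝ) (k : ℕ) : ℝ :=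
  ((Finset.univ : Finset ι).powerset.filter (fun s => s.card ≤ k)).sup'
    ⟨∅, by simp⟩ (fun s => ∑ i ∈ s, x i)

/-- A probability vector: nonnegative entries summing to 1. -/
def IsProbVec {ι : Type*} [Fintype ι] (x : ι → ℝ) : Prop :=
  (∀ i, 0 ≤ x i) ∧ ∑ i, x i = 1

/-- `x ≺ y` (majorization, after padding with zeros to a common dimension): every partial
sum of the `k` largest entries of `x` is at most that of `y`, with equal total sums. -/
def PMaj {ι κ : Type*} [Fintype ι] [DecidableEq ι] [Fintype κ] [DecidableEq κ]
    (x : ι → ℝ) (y : κ → ℝ) : Prop :=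
  (∀ k : ℕ, topSum x k ≤ topSum y k) ∧ (∑ i, x i = ∑ j, y j)

/-- Tensor product of two vectors: `(x ⊗ y)_{(i,j)} = x_i y_j`. -/
def pvTensor {ι κ : Type*} (x : ι → ℝ) (y : κ → ℝ) : ι × κ → ℝ :=
  fun p => x p.1 * y p.2

/-!
For nonnegative `v`, the bound `u ≺ v` on the single largest entry gives `max u ≤ max v`, and the
bound on the sum of all entries but the smallest, subtracted from the common total, gives
`min v ≤ min u`. The extreme entries of `y ⊗ c` are the extreme entries of `y` times those of `c`,
so for `x ⊗ c ≺ y ⊗ c` the positive extreme entry of `c` cancels from both comparisons.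
-/

section Majorization

variable {ι κ : Type*} [Fintype ι] [DecidableEq ι] [Fintype κ] [DecidableEq κ]

theorem sum_le_topSum (u : ι → ℝ) {s : Finset ι} {k : ℕ} (hs : s.card ≤ k) :
    ∑ i ∈ s, u i ≤ topSum u k :=
  Finset.le_sup' (fun s => ∑ i ∈ s, u i) (by simpa using hs)

theorem topSum_le {u : ι → ℝ} {k : ℕ} {a : ℝ}
    (h : ∀ s : Finset ι, s.card ≤ k → ∑ i ∈ s, u i ≤ a) : topSum u k ≤ a :=
  Finset.sup'_le _ _ fun s hs => h s (by simpa using hs)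

theorem apply_le_topSum_one (u : ι → ℝ) (i : ι) : u i ≤ topSum u 1 := by
  simpa using sum_le_topSum u (Finset.card_singleton i).le

theorem topSum_le_mul {u : ι → ℝ} {b : ℝ} (hb : 0 ≤ b) (hub : ∀ i, u i ≤ b) (k : ℕ) :
    topSum u k ≤ k * b :=
  topSum_le fun s hs =>
    calc ∑ i ∈ s, u i ≤ s.card * b := by simpa using s.sum_le_card_nsmul u b fun i _ => hub i
      _ ≤ k * b := by gcongr

theorem sum_sub_apply_le_topSum (u : ι → ℝ) (i : ι) :
    ∑ j, u j - u i ≤ topSum u (Fintype.card ι - 1) := by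
  rw [← Finset.sum_erase_eq_sub (Finset.mem_univ i)]
  exact sum_le_topSum u (Finset.card_erase_of_mem (Finset.mem_univ i)).le

theorem topSum_le_sum_sub {u : ι → ℝ} {a : ℝ} (ha : 0 ≤ a) (hau : ∀ i, a ≤ u i) {k : ℕ}
    (hk : k < Fintype.card ι) : topSum u k ≤ ∑ i, u i - a := by
  refine topSum_le fun s hs => le_sub_iff_add_le.2 ?_
  obtain ⟨i, hi⟩ : ∃ i, i ∉ s := by
    simpa using Finset.exists_mem_notMem_of_card_lt_card (hs.trans_lt hk)
  calc ∑ j ∈ s, u j + a ≤ ∑ j ∈ s, u j + u i := by gcongr; exact hau i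
    _ = ∑ j ∈ insert i s, u j := by rw [Finset.sum_insert hi, add_comm]
    _ ≤ ∑ j, u j := Finset.sum_le_univ_sum_of_nonneg fun j => ha.trans (hau j)

variable {u : ι → ℝ} {v : κ → ℝ}

theorem PMaj.apply_le (h : PMaj u v) {b : ℝ} (hb : 0 ≤ b) (hvb : ∀ j, v j ≤ b) (i : ι) :
    u i ≤ b :=
  calc u i ≤ topSum u 1 := apply_le_topSum_one u i
    _ ≤ topSum v 1 := h.1 1
    _ ≤ b := by simpa using topSum_le_mul hb hvb 1

theorem PMaj.le_apply (h : PMaj u v) (hcard : Fintype.card ι ≤ Fintype.card κ) {a : ℝ}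
    (ha : 0 ≤ a) (hav : ∀ j, a ≤ v j) (i : ι) : a ≤ u i := by
  have hk : Fintype.card ι - 1 < Fintype.card κ :=
    (Nat.sub_lt (Fintype.card_pos_iff.2 ⟨i⟩) Nat.one_pos).trans_le hcard
  have hsub : ∑ j, u j - u i ≤ ∑ j, u j - a :=
    calc ∑ j, u j - u i ≤ topSum u (Fintype.card ι - 1) := sum_sub_apply_le_topSum u i
      _ ≤ topSum v (Fintype.card ι - 1) := h.1 _
      _ ≤ ∑ j, v j - a := topSum_le_sum_sub ha hav hk
      _ = ∑ j, u j - a := by rw [h.2]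
  exact (sub_le_sub_iff_left _).1 hsub

end Majorization

section Catalysis

variable {ι ι' κ : Type*} [Fintype ι] [DecidableEq ι] [Fintype ι'] [DecidableEq ι']
  [Fintype κ] [DecidableEq κ] {x : ι → ℝ} {y : ι' → ℝ} {c : κ → ℝ}

theorem apply_le_of_pMaj_pvTensor (hc : 0 < c) (h : PMaj (pvTensor x c) (pvTensor y c)) {b : ℝ}
    (hb : 0 ≤ b) (hyb : ∀ i, y i ≤ b) (i : ι) : x i ≤ b := by
  obtain ⟨hc_nonneg, j, hj⟩ := Pi.lt_def.1 hc
  have : Nonempty κ := ⟨j⟩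
  obtain ⟨jmax, hjmax⟩ := Finite.exists_max c
  have hbound (p : ι' × κ) : pvTensor y c p ≤ b * c jmax :=
    mul_le_mul (hyb p.1) (hjmax p.2) (hc_nonneg p.2) hb
  exact le_of_mul_le_mul_right
    (h.apply_le (mul_nonneg hb (hc_nonneg jmax)) hbound (i, jmax)) (hj.trans_le (hjmax j))

theorem le_apply_of_pMaj_pvTensor [Nonempty κ] (hc : ∀ j, 0 < c j)
    (h : PMaj (pvTensor x c) (pvTensor y c)) (hcard : Fintype.card ι ≤ Fintype.card ι') {a : ℝ}
    (ha : 0 ≤ a) (hay : ∀ i, a ≤ y i) (i : ι) : a ≤ x i := by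
  obtain ⟨jmin, hjmin⟩ := Finite.exists_min c
  have hbound (p : ι' × κ) : a * c jmin ≤ pvTensor y c p :=
    mul_le_mul (hay p.1) (hjmin p.2) (hc jmin).le (ha.trans (hay p.1))
  have hcard_prod : Fintype.card (ι × κ) ≤ Fintype.card (ι' × κ) := by
    simpa only [Fintype.card_prod] using Nat.mul_le_mul_right _ hcard
  exact le_of_mul_le_mul_right
    (h.le_apply hcard_prod (mul_nonneg ha (hc jmin).le) hbound (i, jmin)) (hc jmin)

theorem catalytic_extreme_coefficients_general [Nonempty κ] (hc : ∀ j, 0 < c j)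
    (h : PMaj (pvTensor x c) (pvTensor y c)) (hcard : Fintype.card ι ≤ Fintype.card ι') {a b : ℝ}
    (ha : 0 ≤ a) (hay : ∀ i, a ≤ y i) (hyb : ∀ i, y i ≤ b) (i : ι) : x i ∈ Set.Icc a b := by
  obtain ⟨i'⟩ : Nonempty ι' :=
    Fintype.card_pos_iff.1 ((Fintype.card_pos_iff.2 ⟨i⟩).trans_le hcard)
  have hb : 0 ≤ b := ha.trans ((hay i').trans (hyb i'))
  have hc_pos : 0 < c := (show StrongLT 0 c from hc).lt
  exact ⟨le_apply_of_pMaj_pvTensor hc h hcard ha hay i, apply_le_of_pMaj_pvTensor hc_pos h hb hyb i⟩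

end Catalysis

/-- Jonathan–Plenio necessary condition on extreme Schmidt coefficients: if
`x ⊗ c ≺ y ⊗ c` for a strictly positive catalyst `c`, then `x₀ ≤ y₀` and
`x_{d-1} ≥ y_{d-1}` (for `x, y` sorted nonincreasingly). -/
theorem catalytic_extreme_coefficients {d k : ℕ} (hd : 0 < d) (x y : Fin d → ℝ)
    (c : Fin k → ℝ)
    (hx : IsProbVec x) (hy : IsProbVec y) (hxa : Antitone x) (hya : Antitone y)
    (hc : IsProbVec c) (hcp : ∀ j, 0 < c j)
    (h : PMaj (pvTensor x c) (pvTensor y c)) :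
    x ⟨0, hd⟩ ≤ y ⟨0, hd⟩ ∧
      y ⟨d - 1, Nat.sub_lt hd Nat.one_pos⟩ ≤ x ⟨d - 1, Nat.sub_lt hd Nat.one_pos⟩ := by
  have : Nonempty (Fin k) :=
    Finset.univ_nonempty_iff.1 (Finset.nonempty_of_sum_ne_zero (hc.2.trans_ne one_ne_zero))
  have hbounds : ∀ i, x i ∈ Set.Icc (y ⟨d - 1, Nat.sub_lt hd Nat.one_pos⟩) (y ⟨0, hd⟩) :=
    catalytic_extreme_coefficients_general hcp h le_rfl (hy.1 _)
      (fun i => hya (Fin.le_def.2 (Nat.le_sub_one_of_lt i.isLt)))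
      (fun i => hya (Fin.le_def.2 (Nat.zero_le i)))
  exact ⟨(hbounds _).2, (hbounds _).1⟩
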